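/- Let Q be a quiver without oriented cycles whose underlying graph is a cycle on N ≥ 2 vertices labeled 0,…,N−1, with edges joining i and i+1 (indices modulo N; for N = 2 there are two parallel edges). Then for every vertex i of Q the frieze sequence (X^i_j)_{j≥0} satisfies a linear recurrence over the field ℚ(x_0,…,x_{N−1}). -/

import Mathlib

open Finset

open scoped Matrix MatrixGroups

/-!
Unfold the cycle of length `N` to the line `ℤ`. The frieze recursion then becomes the unimodular
rule of an `SL₂`-tiling, whose entries are the determinants of row vectors against column vectors
of length two; the initial values lie on a staircase which takes `p` steps across rows and `N - p`
across columns in each period, and they determine these vectors uniquely up to `SL₂`. Hence the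
vectors are multiplied by one and the same monodromy matrix `g` when the row index grows by `p`
or the column index by `N - p`. The values at one vertex run along an antidiagonal of the
tiling, and `s = p (N - p)` steps along it move the row by `N - p` periods forward and the column
by `p` periods backward, which amounts to `g ^ N` acting on the row. By Cayley–Hamilton,
`X (j + 2 s) = tr (g ^ N) X (j + s) - X j`.
-/

section IntSequences

variable {G : Type*} [Group G]

@[to_additive]
theorem exists_int_seq_mul (m : ℤ → G) : ∃ S : ℤ → G, ∀ i, S (i + 1) = m i * S i := by
  refine ⟨fun i => Int.inductionOn' i 0 1 (fun k _ s => m k * s)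
    (fun k _ s => (m (k - 1))⁻¹ * s), fun i => ?_⟩
  rcases le_or_gt 0 i with hi | hi
  · exact Int.inductionOn'_add_one hi
  · have hpred := Int.inductionOn'_sub_one (motive := fun _ => G) (z := i + 1) (b := 0)
      (zero := 1) (succ := fun k _ s => m k * s) (pred := fun k _ s => (m (k - 1))⁻¹ * s) (by omega)
    simp only [add_sub_cancel_right] at hpred
    exact eq_mul_of_inv_mul_eq hpred.symm

@[to_additive]
theorem apply_add_period_eq_mul {m S : ℤ → G} (hS : ∀ i, S (i + 1) = m i * S i) {N : ℤ}
    (hm : Function.Periodic m N) (i : ℤ) : S (i + N) = S i * ((S 0)⁻¹ * S N) := by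
  have hperiodic : Function.Periodic (fun i => (S i)⁻¹ * S (i + N)) 1 := fun i => by
    simp only [add_right_comm i 1 N, hS, hm i]
    group
  have hconst := hperiodic.int_mul_eq i
  simp only [Int.cast_eq, mul_one, zero_add] at hconst
  rw [← hconst, mul_inv_cancel_left]

end IntSequences

/-- `R` counts the `true` letters of the bi-infinite word `d`, up to an additive constant. -/
def IsTrueCount (d : ℤ → Bool) (R : ℤ → ℤ) : Prop :=
  ∀ i, R (i + 1) = R i + (d i).toNat

namespace IsTrueCount

variable {d : ℤ → Bool} {R : ℤ → ℤ}

theorem monotone (hR : IsTrueCount d R) : Monotone R :=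
  monotone_int_of_le_succ fun i => by rw [hR]; omega

theorem sub_one (hR : IsTrueCount d R) (i : ℤ) :
    R (i - 1) = R i - (d (i - 1)).toNat := by
  have := hR (i - 1)
  rw [sub_add_cancel] at this
  omega

theorem not (hR : IsTrueCount d R) : IsTrueCount (fun i => !d i) fun i => i - R i := fun i => by
  have := hR i
  cases hdi : d i <;> simp only [hdi, Bool.toNat_false, Bool.toNat_true, Bool.not_false,
    Bool.not_true] at this ⊢ <;> omega

theorem lt_add_of_eq_true (hR : IsTrueCount d R) {N i : ℤ} (hN : 0 < N) (hi : d i = true) :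
    R i < R (i + N) := by
  have hstep : R (i + 1) = R i + 1 := by simpa [hi] using hR i
  have hle : R (i + 1) ≤ R (i + N) := hR.monotone (by omega)
  omega

theorem exists_add_period (hR : IsTrueCount d R) {N : ℤ} (hd : Function.Periodic d N)
    (hN : 0 < N) (htrue : ∃ i, d i = true) (hfalse : ∃ i, d i = false) :
    ∃ p, 0 < p ∧ p < N ∧ ∀ i, R (i + N) = R i + p := by
  have hperiod := apply_add_period_eq_add (m := fun i => ((d i).toNat : ℤ))
    (fun i => (hR i).trans (add_comm _ _)) (hd.comp fun b => (b.toNat : ℤ))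
  obtain ⟨a, ha⟩ := htrue
  obtain ⟨b, hb⟩ := hfalse
  have hpos := hR.lt_add_of_eq_true hN ha
  have hlt := hR.not.lt_add_of_eq_true (i := b) hN (by simp [hb])
  rw [hperiod] at hpos hlt
  exact ⟨-R 0 + R N, by omega, by omega, hperiod⟩

theorem exists_eq_and_true (hR : IsTrueCount d R) {r a b : ℤ} (ha : R a ≤ r) (hb : r < R b) :
    ∃ i, R i = r ∧ d i = true := by
  by_contra! hnone
  have hle : ∀ c, a ≤ c → R c ≤ r := fun c hc => by
    induction c, hc using Int.leInduction with
    | base => exact ha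
    | succ c _ ih =>
      rcases ih.eq_or_lt with h | h
      · simpa [hR c, hnone c h] using ih
      · have := Bool.toNat_le (d c)
        rw [hR]
        omega
  exact absurd ((hR.monotone (le_max_right a b)).trans (hle _ (le_max_left a b))) hb.not_ge

theorem exists_eq_and_true_of_add_period (hR : IsTrueCount d R) {N p : ℤ} (hp : 0 < p)
    (hN : ∀ i, R (i + N) = R i + p) (r : ℤ) : ∃ i, R i = r ∧ d i = true := by
  have hzsmul : ∀ k : ℤ, R (k * N) = R 0 + k * p := fun k => by
    simpa using AddConstMapClass.map_add_zsmul (⟨R, hN⟩ : AddConstMap ℤ ℤ N p) 0 k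
  refine hR.exists_eq_and_true (a := -|r - R 0| * N) (b := (|r - R 0| + 1) * N) ?_ ?_
  · rw [hzsmul]
    nlinarith [neg_abs_le (r - R 0), abs_nonneg (r - R 0)]
  · rw [hzsmul]
    nlinarith [le_abs_self (r - R 0), abs_nonneg (r - R 0)]

theorem add_one_of_eq_true (hR : IsTrueCount d R) {i : ℤ} (hi : d i = true) :
    R (i + 1) = R i + 1 := by
  simp [hR i, hi]

theorem factorsThrough (hR : IsTrueCount d R) {α : Type*} {U : ℤ → α}
    (hU : ∀ i, d i = false → U (i + 1) = U i) : U.FactorsThrough R := by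
  have hle : ∀ a b, a ≤ b → R a = R b → U a = U b := fun a b hab => by
    induction b, hab using Int.leInduction with
    | base => exact fun _ => rfl
    | succ b hab ih =>
      intro h
      have := hR.monotone hab
      have hstep := hR b
      rw [ih (by omega), hU b (Bool.toNat_eq_zero.1 (by omega))]
  intro a b h
  rcases le_total a b with hab | hba
  · exact hle a b hab h
  · exact (hle b a hba h.symm).symm

theorem exists_comp_eq (hR : IsTrueCount d R) {α : Type*} [Nonempty α] {U : ℤ → α}
    (hU : ∀ i, d i = false → U (i + 1) = U i) : ∃ u : ℤ → α, ∀ i, u (R i) = U i := by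
  obtain ⟨u, hu⟩ := (Function.factorsThrough_iff U).1 (hR.factorsThrough hU)
  exact ⟨u, fun i => (congrFun hu i).symm⟩

end IsTrueCount

section Wedge

variable {K : Type*} [CommRing K]

/-- The determinant of the `2 × 2` matrix with rows `u` and `w`, i.e. the standard symplectic
form on the plane. -/
def wedge (u w : Fin 2 → K) : K := u 0 * w 1 - u 1 * w 0

theorem wedge_smul_add_right (a : K) (u w : Fin 2 → K) : wedge u (a • u + w) = wedge u w := by
  simp only [wedge, Pi.add_apply, Pi.smul_apply, smul_eq_mul]
  ring

theorem wedge_smul_add_left (a : K) (u w : Fin 2 → K) :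
    wedge (a • u + w) w = a * wedge u w := by
  simp only [wedge, Pi.add_apply, Pi.smul_apply, smul_eq_mul]
  ring

theorem wedge_smul_right (a : K) (u w : Fin 2 → K) : wedge u (a • w) = a * wedge u w := by
  simp only [wedge, Pi.smul_apply, smul_eq_mul]
  ring

theorem wedge_smul_smul (a b : K) (u w : Fin 2 → K) :
    wedge (a • u) (b • w) = a * b * wedge u w := by
  simp only [wedge, Pi.smul_apply, smul_eq_mul]
  ring

theorem wedge_rows (A : SL(2, K)) : wedge (A 0) (A 1) = 1 :=
  (Matrix.det_fin_two A.1).symm.trans A.2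

theorem wedge_vecMul_vecMul (A : Matrix (Fin 2) (Fin 2) K) (u w : Fin 2 → K) :
    wedge (u ᵥ* A) (w ᵥ* A) = A.det * wedge u w := by
  simp only [wedge, Matrix.vecMul, dotProduct, Fin.sum_univ_two, Matrix.det_fin_two]
  ring

theorem wedge_vecMul_sq (A : Matrix (Fin 2) (Fin 2) K) (u w : Fin 2 → K) :
    wedge (u ᵥ* A ^ 2) w = A.trace * wedge (u ᵥ* A) w - A.det * wedge u w := by
  simp only [sq, wedge, Matrix.vecMul, dotProduct, Fin.sum_univ_two, Matrix.det_fin_two,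
    Matrix.mul_apply, Matrix.trace_fin_two]
  ring

theorem wedge_mul_wedge (a b u w : Fin 2 → K) :
    wedge b w * wedge a u = wedge a b * wedge u w + wedge a w * wedge b u := by
  simp only [wedge]
  ring

end Wedge

section Tiling

/-- An `SL₂`-tiling of the plane, presented by vectors `row r` and `col c` whose pairings
`wedge (row r) (col c)` are the entries of the tiling. -/
structure SL2Tiling (K : Type*) [CommRing K] where
  /-- The vectors attached to the rows of the tiling. -/
  row : ℤ → Fin 2 → K
  /-- The vectors attached to the columns of the tiling. -/
  col : ℤ → Fin 2 → K
  wedge_row_succ : ∀ r, wedge (row r) (row (r + 1)) = 1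
  wedge_succ_col : ∀ c, wedge (col (c + 1)) (col c) = 1

variable {K : Type*}

/-- A sequence of row vectors whose shift by `p` is multiplication by the monodromy matrix `g`. -/
def IsQuasiPeriodic [CommRing K] (g : SL(2, K)) (p : ℤ) (u : ℤ → Fin 2 → K) : Prop :=
  ∀ r, u (r + p) = u r ᵥ* g.1

theorem IsQuasiPeriodic.add_mul [CommRing K] {g : SL(2, K)} {p : ℤ} {u : ℤ → Fin 2 → K}
    (hu : IsQuasiPeriodic g p u) (r k : ℤ) : u (r + k * p) = u r ᵥ* (g ^ k).1 := by
  have hperiodic : Function.Periodic (fun k : ℤ => u (r + k * p) ᵥ* (g ^ (-k)).1) 1 := fun k => by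
    dsimp only
    rw [show r + (k + 1) * p = r + k * p + p by ring, hu, Matrix.vecMul_vecMul,
      ← Matrix.SpecialLinearGroup.coe_mul, ← zpow_one_add]
    congr 3
    ring
  have hconst := hperiodic.int_mul_eq k
  simp only [Int.cast_eq, mul_one, zero_mul, add_zero, neg_zero, zpow_zero,
    Matrix.SpecialLinearGroup.coe_one, Matrix.vecMul_one] at hconst
  rw [← hconst, Matrix.vecMul_vecMul, ← Matrix.SpecialLinearGroup.coe_mul, ← zpow_add,
    neg_add_cancel, zpow_zero, Matrix.SpecialLinearGroup.coe_one, Matrix.vecMul_one]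

namespace SL2Tiling

variable [CommRing K] (t : SL2Tiling K)

/-- The entry of the tiling in row `r` and column `c`. -/
def entry (r c : ℤ) : K := wedge (t.row r) (t.col c)

theorem entry_mul_entry (r c : ℤ) :
    t.entry (r + 1) c * t.entry r (c + 1) = 1 + t.entry r c * t.entry (r + 1) (c + 1) := by
  simp only [entry]
  rw [wedge_mul_wedge, t.wedge_row_succ, t.wedge_succ_col, one_mul]

theorem entry_add_sub {g : SL(2, K)} {p q : ℤ} (hrow : IsQuasiPeriodic g p t.row)
    (hcol : IsQuasiPeriodic g q t.col) (r c k : ℤ) :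
    t.entry (r + k * (p * q)) (c - k * (p * q)) =
      wedge (t.row r ᵥ* (g ^ ((p + q) * k)).1) (t.col c) := by
  have hr : r + k * (p * q) = r + (k * q) * p := by ring
  have hc : c - k * (p * q) = c + (-(k * p)) * q := by ring
  have hexp : (p + q) * k = k * q + k * p := by ring
  -- The column's power of `g` is moved to the row, since `g ^ (k * p)` preserves `wedge`.
  rw [entry, hr, hc, hrow.add_mul, hcol.add_mul, hexp, zpow_add,
    Matrix.SpecialLinearGroup.coe_mul, ← Matrix.vecMul_vecMul]
  have hinv := wedge_vecMul_vecMul (g ^ (k * p)).1 (t.row r ᵥ* (g ^ (k * q)).1)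
    (t.col c ᵥ* (g ^ (-(k * p))).1)
  rw [(g ^ (k * p)).2, one_mul, Matrix.vecMul_vecMul (t.col c),
    ← Matrix.SpecialLinearGroup.coe_mul, ← zpow_add, neg_add_cancel, zpow_zero,
    Matrix.SpecialLinearGroup.coe_one, Matrix.vecMul_one] at hinv
  exact hinv.symm

theorem entry_recurrence {g : SL(2, K)} {p q : ℤ} (hrow : IsQuasiPeriodic g p t.row)
    (hcol : IsQuasiPeriodic g q t.col) (r c : ℤ) :
    t.entry (r + 2 * (p * q)) (c - 2 * (p * q)) =
      (g ^ (p + q)).1.trace * t.entry (r + p * q) (c - p * q) - t.entry r c := by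
  have hone := t.entry_add_sub hrow hcol r c 1
  rw [one_mul, mul_one] at hone
  rw [t.entry_add_sub hrow hcol, zpow_mul, zpow_ofNat,
    Matrix.SpecialLinearGroup.coe_pow, wedge_vecMul_sq, (g ^ (p + q)).2, one_mul, hone, entry]

end SL2Tiling

variable [Field K]

/-- The frame of a frontier entry `x` of an `SL₂`-tiling is the matrix `A` for which `A 0` is the
row vector and `x • A 1` the column vector of that entry. Left multiplication by `rowStep x y`
carries it to the frame of a frontier entry `y` in the same column and the next row. -/
def rowStep (x y : Kˣ) : SL(2, K) :=
  ⟨!![(y / x : K), 1; 0, (x / y : K)], by simp [Matrix.det_fin_two]⟩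

/-- Left multiplication by `colStep x y` carries the frame of a frontier entry `x` to that of a
frontier entry `y` in the same row and the next column. -/
def colStep (x y : Kˣ) : SL(2, K) :=
  ⟨!![1, 0; (x * y : K)⁻¹, 1], by simp [Matrix.det_fin_two]⟩

variable (x y : Kˣ) (A : SL(2, K))

theorem rowStep_mul_zero : (rowStep x y * A) 0 = (y / x : K) • A 0 + A 1 := by
  ext k
  rw [Matrix.SpecialLinearGroup.coe_mul]
  simp [Matrix.mul_apply, rowStep]

theorem rowStep_mul_one : (rowStep x y * A) 1 = (x / y : K) • A 1 := by
  ext k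
  rw [Matrix.SpecialLinearGroup.coe_mul]
  simp [Matrix.mul_apply, rowStep]

theorem colStep_mul_zero : (colStep x y * A) 0 = A 0 := by
  ext k
  rw [Matrix.SpecialLinearGroup.coe_mul]
  simp [Matrix.mul_apply, colStep]

theorem colStep_mul_one : (colStep x y * A) 1 = (x * y : K)⁻¹ • A 0 + A 1 := by
  ext k
  rw [Matrix.SpecialLinearGroup.coe_mul]
  simp [Matrix.mul_apply, colStep]

theorem wedge_rowStep_mul : wedge (A 0) ((rowStep x y * A) 0) = 1 := by
  rw [rowStep_mul_zero, wedge_smul_add_right, wedge_rows]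

theorem smul_rowStep_mul : (y : K) • (rowStep x y * A) 1 = (x : K) • A 1 := by
  rw [rowStep_mul_one, smul_smul, mul_div_cancel₀ _ y.ne_zero]

theorem wedge_colStep_mul : wedge ((y : K) • (colStep x y * A) 1) ((x : K) • A 1) = 1 := by
  rw [colStep_mul_one, wedge_smul_smul, wedge_smul_add_left, wedge_rows, mul_one,
    mul_comm (y : K), mul_inv_cancel₀ (mul_ne_zero x.ne_zero y.ne_zero)]

theorem exists_sl2Tiling_of_frontier {N p : ℤ} {d : ℤ → Bool} (hd : Function.Periodic d N)
    {R : ℤ → ℤ} (hR : IsTrueCount d R) (hRN : ∀ i, R (i + N) = R i + p) (hp : 0 < p) (hpN : p < N)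
    {x : ℤ → Kˣ} (hx : Function.Periodic x N) :
    ∃ (t : SL2Tiling K) (g : SL(2, K)), (∀ i, t.entry (R i) (i - R i) = x i) ∧
      IsQuasiPeriodic g p t.row ∧ IsQuasiPeriodic g (N - p) t.col := by
  obtain ⟨S, hS⟩ := exists_int_seq_mul fun i =>
    if d i then rowStep (x i) (x (i + 1)) else colStep (x i) (x (i + 1))
  have hSrow : ∀ i, d i = true → S (i + 1) = rowStep (x i) (x (i + 1)) * S i := fun i hi => by
    rw [hS, if_pos hi]
  have hScol : ∀ i, d i = false → S (i + 1) = colStep (x i) (x (i + 1)) * S i := fun i hi => by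
    rw [hS, if_neg (by simp [hi])]
  have hSN := apply_add_period_eq_mul hS (N := N) fun i => by
    simp only [add_right_comm i N 1, hd i, hx i, hx (i + 1)]
  have hDN : ∀ i, i + N - R (i + N) = i - R i + (N - p) := fun i => by rw [hRN]; ring
  have hRsurj := hR.exists_eq_and_true_of_add_period hp hRN
  have hDsurj := hR.not.exists_eq_and_true_of_add_period (by omega) hDN
  simp only [Bool.not_eq_true'] at hDsurj
  obtain ⟨u, hu⟩ := hR.exists_comp_eq (U := fun i => S i 0)
    fun i hi => by rw [hScol i hi, colStep_mul_zero]
  obtain ⟨w, hw⟩ := hR.not.exists_comp_eq (U := fun i => (x i : K) • S i 1)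
    fun i hi => by rw [hSrow i (by simpa using hi), smul_rowStep_mul]
  refine ⟨⟨u, w, fun r => ?_, fun c => ?_⟩, (S 0)⁻¹ * S N, fun i => ?_, fun r => ?_, fun c => ?_⟩
  · obtain ⟨i, rfl, hi⟩ := hRsurj r
    rw [← hR.add_one_of_eq_true hi, hu, hu, hSrow i hi, wedge_rowStep_mul]
  · obtain ⟨i, rfl, hi⟩ := hDsurj c
    rw [← hR.not.add_one_of_eq_true (by simp [hi]), hw, hw, hScol i hi, wedge_colStep_mul]
  · change wedge (u (R i)) (w (i - R i)) = x i
    rw [hu, hw, wedge_smul_right, wedge_rows, mul_one]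
  · obtain ⟨i, rfl, -⟩ := hRsurj r
    change u (R i + p) = u (R i) ᵥ* ((S 0)⁻¹ * S N).1
    rw [← hRN, hu, hu, hSN, Matrix.SpecialLinearGroup.coe_mul, Matrix.mul_apply_eq_vecMul]
  · obtain ⟨i, rfl, -⟩ := hDsurj c
    change w (i - R i + (N - p)) = w (i - R i) ᵥ* ((S 0)⁻¹ * S N).1
    rw [← hDN, hw, hw, hSN, hx, Matrix.SpecialLinearGroup.coe_mul, Matrix.mul_apply_eq_vecMul,
      Matrix.smul_vecMul]

end Tiling

section Frieze

variable {V α K : Type*} [AddGroup V] [One V]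

/-- `f` certifies the absence of oriented cycles: it increases along the arrow `k → k + 1`
(if `d k`) or `k + 1 → k` (otherwise) for each `k`. -/
def IsTopologicalOrder [LT α] (d : V → Bool) (f : V → α) : Prop :=
  ∀ k, f (if d k then k else k + 1) < f (if d k then k + 1 else k)

/-- The frieze recursion for the quiver on `V` with one arrow `k → k + 1` (if `d k`) or
`k + 1 → k` (otherwise) for each `k`: a neighbor of `v` enters with index `j + 1` if it is the
source of the arrow joining it to `v`, and with index `j` if it is the target. -/
def IsFrieze [Semiring K] (d : V → Bool) (X : V → ℕ → K) : Prop :=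
  ∀ v j, X v (j + 1) * X v j =
    1 + X (v - 1) (j + (d (v - 1)).toNat) * X (v + 1) (j + (!d v).toNat)

theorem IsTopologicalOrder.induction [Preorder α] [WellFoundedLT α] {d : V → Bool} {f : V → α}
    (hf : IsTopologicalOrder d f) {P : V → ℕ → Prop} (zero : ∀ v, P v 0)
    (succ : ∀ v j, P v j → P (v - 1) (j + (d (v - 1)).toNat) → P (v + 1) (j + (!d v).toNat) →
      P v (j + 1)) (v : V) (j : ℕ) : P v j := by
  induction j generalizing v with
  | zero => exact zero v
  | succ j ihj =>
    induction h : f v using WellFoundedLT.induction generalizing v with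
    | _ a ihv =>
      refine succ v j (ihj v) ?_ ?_
      · have hlt := hf (v - 1)
        cases hd : d (v - 1) with
        | false => exact ihj _
        | true => exact ihv _ (by simpa [hd, h] using hlt) _ rfl
      · have hlt := hf v
        cases hd : d v with
        | false => exact ihv _ (by simpa [hd, h] using hlt) _ rfl
        | true => exact ihj _

theorem prod_filter_target_eq [Fintype V] [DecidableEq V] {M : Type*} [CommMonoid M]
    (d : V → Bool) (g : V → M) (v : V) :
    ∏ k with (if d k then k + 1 else k) = v, g k =
      (if d (v - 1) then g (v - 1) else 1) * (if d v then 1 else g v) := by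
  have hsplit : ∀ k, (if (if d k then k + 1 else k) = v then g k else 1) =
      (if k = v - 1 then if d k then g k else 1 else 1) *
        (if k = v then if d k then 1 else g k else 1) := fun k => by
    cases hd : d k <;> simp [eq_sub_iff_add_eq]
  simp only [prod_filter, hsplit, prod_mul_distrib, prod_ite_eq', mem_univ, if_true]

theorem isFrieze_of_prod [Fintype V] [DecidableEq V] [CommSemiring K] {d : V → Bool}
    {X : V → ℕ → K}
    (hX : ∀ v j, X v (j + 1) * X v j =
      1 + (∏ k with (if d k then k + 1 else k) = v, X (if d k then k else k + 1) (j + 1)) *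
        ∏ k with (if d k then k else k + 1) = v, X (if d k then k + 1 else k) j) :
    IsFrieze d X := fun v j => by
  have hsource := prod_filter_target_eq (fun k => !d k)
    (fun k => X (if d k then k + 1 else k) j) v
  simp only [Bool.not_eq_true', ← Bool.not_eq_true, ite_not] at hsource
  rw [hX, prod_filter_target_eq, hsource]
  cases hpred : d (v - 1) <;> cases hv : d v <;> simp [mul_comm]

variable {W : Type*} [AddGroup W] [One W] {φ : W → V} {d : V → Bool}

theorem IsTopologicalOrder.comp [LT α] {f : V → α} (hf : IsTopologicalOrder d f)
    (hφ : ∀ i, φ (i + 1) = φ i + 1) :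
    IsTopologicalOrder (fun i => d (φ i)) fun i => f (φ i) := fun i => by
  simpa only [apply_ite φ, hφ] using hf (φ i)

theorem IsFrieze.comp [Semiring K] {X : V → ℕ → K} (hX : IsFrieze d X)
    (hφ : ∀ i, φ (i + 1) = φ i + 1) :
    IsFrieze (fun i => d (φ i)) fun i => X (φ i) := fun i j => by
  have hpred : φ (i - 1) = φ i - 1 := by rw [eq_sub_iff_add_eq, ← hφ, sub_add_cancel]
  simpa only [hφ, hpred] using hX (φ i) j

end Frieze

section FriezeOnLine

variable {α K : Type*} {d : ℤ → Bool}

theorem IsTopologicalOrder.exists_eq_true [Preorder α] [WellFoundedLT α] {f : ℤ → α}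
    (hf : IsTopologicalOrder d f) : ∃ i, d i = true := by
  obtain ⟨k, hk⟩ := WellFounded.not_rel_apply_succ (r := (· < ·)) fun n : ℕ => f n
  by_contra! hfalse
  exact hk (by simpa [hfalse] using hf k)

theorem IsTopologicalOrder.exists_eq_false [Preorder α] [WellFoundedLT α] {f : ℤ → α}
    (hf : IsTopologicalOrder d f) : ∃ i, d i = false := by
  obtain ⟨k, hk⟩ := WellFounded.not_rel_apply_succ (r := (· < ·)) fun n : ℕ => f (-n)
  by_contra! htrue
  exact hk (by simpa [htrue] using hf (-(k + 1 : ℕ)))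

variable [Field K] {X : ℤ → ℕ → K}

theorem IsFrieze.eq_entry [Preorder α] [WellFoundedLT α] {f : ℤ → α} (hX : IsFrieze d X)
    (hf : IsTopologicalOrder d f) (hne : ∀ i j, X i j ≠ 0) {R : ℤ → ℤ} (hR : IsTrueCount d R)
    (t : SL2Tiling K) (hzero : ∀ i, X i 0 = t.entry (R i) (i - R i)) (i : ℤ) (j : ℕ) :
    X i j = t.entry (R i + j) (i - (R i + j)) := by
  induction i, j using hf.induction with
  | zero i => simpa using hzero i
  | succ i j ih ihpred ihsucc =>
    have hpred : R (i - 1) + (j + (d (i - 1)).toNat : ℕ) = R i + j := by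
      rw [hR.sub_one]
      omega
    have hsucc : R (i + 1) + (j + (!d i).toNat : ℕ) = R i + j + 1 := by
      have hletter : (d i).toNat + (!d i).toNat = 1 := by cases d i <;> rfl
      rw [hR i]
      omega
    have hunimodular := t.entry_mul_entry (R i + j) (i - 1 - (R i + j))
    refine mul_right_cancel₀ (hne i j) ?_
    rw [hX i j, ihpred, ihsucc, ih, hpred, hsucc]
    convert hunimodular.symm using 3 <;> push_cast <;> ring_nf

theorem IsFrieze.exists_two_step_recurrence [Preorder α] [WellFoundedLT α] {f : ℤ → α}
    (hX : IsFrieze d X) (hf : IsTopologicalOrder d f) (hne : ∀ i j, X i j ≠ 0) {N : ℤ}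
    (hN : 0 < N) (hd : Function.Periodic d N) (hzero : Function.Periodic (fun i => X i 0) N) :
    ∃ (s : ℕ) (τ : K), 0 < s ∧ ∀ i j, X i (j + 2 * s) = τ * X i (j + s) - X i j := by
  obtain ⟨R, hR⟩ := exists_int_seq_add fun i => ((d i).toNat : ℤ)
  replace hR : IsTrueCount d R := fun i => (hR i).trans (add_comm _ _)
  obtain ⟨p, hp, hpN, hRN⟩ := hR.exists_add_period hd hN hf.exists_eq_true hf.exists_eq_false
  obtain ⟨t, g, ht, hrow, hcol⟩ := exists_sl2Tiling_of_frontier hd hR hRN hp hpN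
    (x := fun i => Units.mk0 (X i 0) (hne i 0)) fun i => Units.ext (hzero i)
  have hentry := hX.eq_entry hf hne hR t fun i => (ht i).symm
  have hs : 0 < p * (N - p) := mul_pos hp (sub_pos.2 hpN)
  obtain ⟨s, hps⟩ := Int.eq_ofNat_of_zero_le hs.le
  refine ⟨s, (g ^ (p + (N - p))).1.trace, by omega, fun i j => ?_⟩
  have hrec := t.entry_recurrence hrow hcol (R i + j) (i - (R i + j))
  simp only [hentry, hps] at hrec ⊢
  push_cast
  simpa only [sub_sub, add_assoc] using hrec

end FriezeOnLine

theorem exists_linearRecurrence_of_two_step {K : Type*} [CommRing K] {a : ℕ → K} {s : ℕ} {τ : K}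
    (hs : 0 < s) (ha : ∀ j, a (j + 2 * s) = τ * a (j + s) - a j) :
    ∃ E : LinearRecurrence K, 0 < E.order ∧ E.IsSolution a :=
  ⟨⟨2 * s, Pi.single ⟨s, by omega⟩ τ - Pi.single ⟨0, by omega⟩ 1⟩, by simpa using hs, fun j => by
    simp [ha, sub_mul, sum_sub_distrib, Pi.single_apply]⟩

theorem IsFrieze.exists_linearRecurrence {V α K : Type*} [AddGroup V] [One V] [Finite V]
    [Preorder α] [WellFoundedLT α] [Field K] {d : V → Bool} {X : V → ℕ → K} {f : V → α}
    (hX : IsFrieze d X) (hf : IsTopologicalOrder d f) (hne : ∀ v j, X v j ≠ 0) (v : V) :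
    ∃ E : LinearRecurrence K, 0 < E.order ∧ E.IsSolution (X v) := by
  let cover : ℤ → V := fun i => v + i • (1 : V)
  have hcover : ∀ i, cover (i + 1) = cover i + 1 := fun i => by
    simp only [cover, add_one_zsmul, add_assoc]
  have hperiodic : Function.Periodic cover (addOrderOf (1 : V)) := fun i => by
    simp only [cover, add_zsmul, natCast_zsmul, addOrderOf_nsmul_eq_zero, add_zero]
  obtain ⟨s, τ, hs, hrec⟩ := (hX.comp hcover).exists_two_step_recurrence (hf.comp hcover)
    (fun i => hne _) (by exact_mod_cast addOrderOf_pos (1 : V)) (hperiodic.comp d)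
    (hperiodic.comp (X · 0))
  exact exists_linearRecurrence_of_two_step hs fun j => by simpa [cover] using hrec 0 j

section Positivity

variable {R S K : Type*} [CommSemiring R] [CommSemiring S] [PartialOrder S]
  [CommSemiring K] [Algebra R K]

/-- `a` is a quotient `P / Q` of elements of `R` at which the evaluation `ε` is positive. Such
elements are closed under the operations of the frieze recursion, which shows that they are
never zero. -/
def IsPositiveFraction (ε : R →+* S) (a : K) : Prop :=
  ∃ P Q : R, 0 < ε P ∧ 0 < ε Q ∧ a * algebraMap R K Q = algebraMap R K P

namespace IsPositiveFraction

variable {ε : R →+* S} {a b : K}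

theorem ne_zero [FaithfulSMul R K] (ha : IsPositiveFraction ε a) : a ≠ 0 := by
  obtain ⟨P, Q, hP, -, h⟩ := ha
  rintro rfl
  rw [zero_mul, eq_comm, FaithfulSMul.algebraMap_eq_zero_iff] at h
  simp [h] at hP

variable [IsStrictOrderedRing S]

theorem of_algebraMap {P : R} (hP : 0 < ε P) : IsPositiveFraction ε (algebraMap R K P) :=
  ⟨P, 1, hP, by simp, by simp⟩

theorem one_add (ha : IsPositiveFraction ε a) : IsPositiveFraction ε (1 + a) := by
  obtain ⟨P, Q, hP, hQ, h⟩ := ha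
  exact ⟨Q + P, Q, by simpa using add_pos hQ hP, hQ, by rw [add_mul, one_mul, h, map_add]⟩

theorem mul (ha : IsPositiveFraction ε a) (hb : IsPositiveFraction ε b) :
    IsPositiveFraction ε (a * b) := by
  obtain ⟨P, Q, hP, hQ, h⟩ := ha
  obtain ⟨P', Q', hP', hQ', h'⟩ := hb
  exact ⟨P * P', Q * Q', by simpa using mul_pos hP hP', by simpa using mul_pos hQ hQ', by
    rw [map_mul, map_mul, mul_mul_mul_comm, h, h']⟩

theorem of_mul (hab : IsPositiveFraction ε (a * b)) (hb : IsPositiveFraction ε b) :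
    IsPositiveFraction ε a := by
  obtain ⟨P, Q, hP, hQ, h⟩ := hab
  obtain ⟨P', Q', hP', hQ', h'⟩ := hb
  refine ⟨P * Q', Q * P', by simpa using mul_pos hP hQ', by simpa using mul_pos hQ hP', ?_⟩
  rw [map_mul, map_mul, ← h, ← h']
  ring

end IsPositiveFraction

theorem IsFrieze.isPositiveFraction [IsStrictOrderedRing S] {V α : Type*} [AddGroup V] [One V]
    [Preorder α] [WellFoundedLT α] {d : V → Bool} {X : V → ℕ → K} {f : V → α} {ε : R →+* S}
    (hX : IsFrieze d X) (hf : IsTopologicalOrder d f)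
    (hzero : ∀ v, IsPositiveFraction ε (X v 0)) (v : V) (j : ℕ) :
    IsPositiveFraction ε (X v j) := by
  induction v, j using hf.induction with
  | zero v => exact hzero v
  | succ v j ih ihpred ihsucc =>
    refine IsPositiveFraction.of_mul ?_ ih
    rw [hX]
    exact (ihpred.mul ihsucc).one_add

end Positivity

theorem stmt_0_general {V α K : Type*} [AddGroup V] [One V] [Fintype V] [DecidableEq V]
    [Preorder α] [WellFoundedLT α] [Field K] (d : V → Bool)
    (hacyclic : ∃ f : V → α, ∀ k, f (if d k then k else k + 1) < f (if d k then k + 1 else k))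
    (X : V → ℕ → K) (hne : ∀ v j, X v j ≠ 0)
    (hXrec : ∀ v j, X v (j + 1) * X v j =
      1 + (∏ k with (if d k then k + 1 else k) = v, X (if d k then k else k + 1) (j + 1)) *
        ∏ k with (if d k then k else k + 1) = v, X (if d k then k + 1 else k) j) (v : V) :
    ∃ s : ℕ, 1 ≤ s ∧ ∃ coeff : Fin s → K,
      ∀ j, X v (j + s) = ∑ t : Fin s, coeff t * X v (j + t.val) := by
  obtain ⟨f, hf⟩ := hacyclic
  obtain ⟨E, hE, hsol⟩ := (isFrieze_of_prod hXrec).exists_linearRecurrence hf hne v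
  exact ⟨E.order, hE, E.coeffs, hsol⟩

/-- Let `Q` be a quiver without oriented cycles whose underlying graph is a
cycle on `N = n + 2 ≥ 2` vertices `0,…,N−1`, where edge `k` joins `k` and `k+1 (mod N)`
(for `N = 2` this gives two parallel edges). The orientation is encoded by
`dir : Fin N → Bool` : edge `k` is the arrow `k → k+1` if `dir k = true`, and the arrow
`k+1 → k` otherwise. Absence of oriented cycles is expressed by the existence of a
topological ordering `f`. Then each frieze sequence `(X^i_j)_j` in `ℚ(x_0,…,x_{N−1})`
satisfies a linear recurrence. -/
theorem stmt_0 (n : ℕ) (dir : Fin (n+2) → Bool)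
    -- no oriented cycles (existence of a topological order on the vertices)
    (hacyclic : ∃ f : Fin (n+2) → ℕ, ∀ k : Fin (n+2),
      f (if dir k then k else k + 1) < f (if dir k then k + 1 else k))
    -- the frieze sequences
    (X : Fin (n+2) → ℕ → FractionRing (MvPolynomial (Fin (n+2)) ℚ))
    (hX0 : ∀ v, X v 0 = algebraMap (MvPolynomial (Fin (n+2)) ℚ)
      (FractionRing (MvPolynomial (Fin (n+2)) ℚ)) (MvPolynomial.X v))
    (hXrec : ∀ v (j : ℕ), X v (j+1) * X v j =
      1 + (∏ k ∈ univ.filter (fun k : Fin (n+2) => (if dir k then k + 1 else k) = v),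
              X (if dir k then k else k + 1) (j+1)) *
          (∏ k ∈ univ.filter (fun k : Fin (n+2) => (if dir k then k else k + 1) = v),
              X (if dir k then k + 1 else k) j)) :
    -- every frieze sequence satisfies a linear recurrence
    ∀ i : Fin (n+2), ∃ s : ℕ, 1 ≤ s ∧
      ∃ coeff : Fin s → FractionRing (MvPolynomial (Fin (n+2)) ℚ),
        ∀ j : ℕ, X i (j + s) = ∑ t : Fin s, coeff t * X i (j + t.val) := by
  obtain ⟨f, hf⟩ := hacyclic
  refine stmt_0_general dir ⟨f, hf⟩ X (fun v j => ?_) hXrec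
  refine ((isFrieze_of_prod hXrec).isPositiveFraction (f := f)
    (ε := MvPolynomial.eval fun _ : Fin (n + 2) => (1 : ℚ)) hf (fun w => ?_) v j).ne_zero
  rw [hX0]
  exact .of_algebraMap (by simp)
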